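/- For every odd integer a ≥ 3, the range of the ℚ-linear map f_a : V_a → V_{a+1} (defined on basis vectors by f_a(e_{(r,s)}) = (2/(r+1))·e_{(min(r+1,s), max(r+1,s))} + (2/(s+1))·e_{(r,s+1)}) has codimension one in V_{a+1}, and the one-dimensional subspace spanned by the basis vector e_{((a−1)/2, (a+3)/2)} is a complement: V_{a+1} is the internal direct sum of range(f_a) and ℚ·e_{((a−1)/2,(a+3)/2)}. -/

import Mathlib

/-- The index set `B a = {(r,s) : 1 ≤ r ≤ s, r + s = a}`. -/
def B (a : ℕ) : Type := {p : ℕ × ℕ // 1 ≤ p.1 ∧ p.1 ≤ p.2 ∧ p.1 + p.2 = a}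

/-- The ℚ-vector space `V a` of finitely supported functions `B a → ℚ`. -/
abbrev V (a : ℕ) : Type := B a →₀ ℚ

/-- The image of the basis vector `e_{(r,s)}` under `f_a`, namely
`(2/(r+1)) • e_{(min(r+1,s), max(r+1,s))} + (2/(s+1)) • e_{(r, s+1)}`. -/
noncomputable def fAux (a : ℕ) (p : B a) : V (a + 1) :=
  Finsupp.single
    ⟨(min (p.1.1 + 1) p.1.2, max (p.1.1 + 1) p.1.2), by
      obtain ⟨⟨r, s⟩, h1, h2, h3⟩ := p
      dsimp only at *
      omega⟩ ((2 : ℚ) / (p.1.1 + 1))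
  + Finsupp.single
    ⟨(p.1.1, p.1.2 + 1), by
      obtain ⟨⟨r, s⟩, h1, h2, h3⟩ := p
      dsimp only at *
      omega⟩ ((2 : ℚ) / (p.1.2 + 1))

/-- The ℚ-linear map `f_a : V a → V (a+1)` determined on the standard basis by
`f_a(e_{(r,s)}) = (2/(r+1)) • e_{(min(r+1,s), max(r+1,s))} + (2/(s+1)) • e_{(r, s+1)}`. -/
noncomputable def f (a : ℕ) : V a →ₗ[ℚ] V (a + 1) :=
  Finsupp.lsum ℚ fun p => LinearMap.toSpanSingleton ℚ (V (a + 1)) (fAux a p)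

/-- Constructor for `B a`. -/
def mkB (a r s : ℕ) (h : 1 ≤ r ∧ r ≤ s ∧ r + s = a) : B a := ⟨(r, s), h⟩

theorem exists_mkB (a : ℕ) (p : B a) : ∃ r s h, p = mkB a r s h :=
  ⟨p.1.1, p.1.2, p.2, rfl⟩

theorem fAux_mkB (a r s : ℕ) (h : 1 ≤ r ∧ r ≤ s ∧ r + s = a) (hlt : r + 1 ≤ s) :
    fAux a (mkB a r s h) =
      Finsupp.single (mkB (a + 1) (r + 1) s (by omega)) ((2 : ℚ) / (r + 1)) +
      Finsupp.single (mkB (a + 1) r (s + 1) (by omega)) ((2 : ℚ) / (s + 1)) := by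
  have e : ∀ (r' s' : ℕ) (h' : 1 ≤ r' ∧ r' ≤ s' ∧ r' + s' = a + 1), r' = r + 1 → s' = s →
      mkB (a + 1) r' s' h' = mkB (a + 1) (r + 1) s (by omega) := by
    rintro _ _ _ rfl rfl; rfl
  rw [← e (min (r + 1) s) (max (r + 1) s) (by omega) (by omega) (by omega)]
  rfl

/-- Basis vector of `V (2t+2)` with first index `k`. -/
noncomputable def eV (t k : ℕ) (h1 : 1 ≤ k) (h2 : k ≤ t + 1) : V (2 * t + 1 + 1) :=
  Finsupp.single (mkB _ k (2 * t + 2 - k) (by omega)) 1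

theorem f_single (a : ℕ) (p : B a) : f a (Finsupp.single p 1) = fAux a p := by
  simp [f]

theorem fAux_eq (t k : ℕ) (h1 : 1 ≤ k) (h2 : k ≤ t) :
    fAux (2 * t + 1) (mkB _ k (2 * t + 1 - k) (by omega)) =
      ((2 : ℚ) / (k + 1)) • eV t (k + 1) (by omega) (by omega) +
      ((2 : ℚ) / ((2 * t + 1 - k : ℕ) + 1)) • eV t k h1 (by omega) := by
  rw [fAux_mkB _ _ _ _ (by omega)]
  unfold eV
  rw [Finsupp.smul_single, Finsupp.smul_single, smul_eq_mul, smul_eq_mul, mul_one, mul_one]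
  congr 3 <;> omega

theorem eV_mem_iff (t k : ℕ) (h1 : 1 ≤ k) (h2 : k ≤ t) (M : Submodule ℚ (V (2 * t + 1 + 1)))
    (hM : LinearMap.range (f (2 * t + 1)) ≤ M) :
    eV t (k + 1) (by omega) (by omega) ∈ M ↔ eV t k h1 (by omega) ∈ M := by
  have h := hM (LinearMap.mem_range_self (f (2 * t + 1))
    (Finsupp.single (mkB _ k (2 * t + 1 - k) (by omega)) 1))
  rw [f_single, fAux_eq t k h1 h2] at h
  have c1 : (2 : ℚ) / (k + 1) ≠ 0 := by positivity
  have c2 : (2 : ℚ) / ((2 * t + 1 - k : ℕ) + 1) ≠ 0 := by positivity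
  constructor
  · intro h'
    exact (M.smul_mem_iff c2).1 ((M.add_mem_iff_right (M.smul_mem _ h')).1 h)
  · intro h'
    exact (M.smul_mem_iff c1).1 ((M.add_mem_iff_left (M.smul_mem _ h')).1 h)

theorem eV_mem_iff_one (t : ℕ) (M : Submodule ℚ (V (2 * t + 1 + 1)))
    (hM : LinearMap.range (f (2 * t + 1)) ≤ M) (k : ℕ) (h1 : 1 ≤ k) :
    ∀ h2 : k ≤ t + 1, (eV t k h1 h2 ∈ M ↔ eV t 1 le_rfl (by omega) ∈ M) := by
  induction k, h1 using Nat.le_induction with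
  | base => intro _; rfl
  | succ k hk ih =>
    intro h2
    rw [eV_mem_iff t k hk (by omega) M hM]
    exact ih (by omega)

/-- The functional annihilating the range. -/
noncomputable def lam (a : ℕ) : V a →ₗ[ℚ] ℚ :=
  Finsupp.lsum ℚ fun p => LinearMap.toSpanSingleton ℚ ℚ
    ((-1) ^ p.1.1 * (p.1.1.factorial : ℚ) * (p.1.2.factorial : ℚ))

theorem lam_single (a r s : ℕ) (h : 1 ≤ r ∧ r ≤ s ∧ r + s = a) (c : ℚ) :
    lam a (Finsupp.single (mkB a r s h) c) =
      c * ((-1) ^ r * (r.factorial : ℚ) * (s.factorial : ℚ)) := by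
  have e : lam a (Finsupp.single (mkB a r s h) c) = c * ((-1) ^ (mkB a r s h).1.1 *
      ((mkB a r s h).1.1.factorial : ℚ) * ((mkB a r s h).1.2.factorial : ℚ)) := by
    simp [lam]
  exact e

theorem lam_f (t : ℕ) (x : V (2 * t + 1)) : lam _ (f (2 * t + 1) x) = 0 := by
  suffices h : (lam _) ∘ₗ (f (2 * t + 1)) = 0 from LinearMap.congr_fun h x
  apply Finsupp.lhom_ext'
  intro p
  apply LinearMap.ext_ring
  simp only [LinearMap.comp_apply, Finsupp.lsingle_apply, LinearMap.zero_apply]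
  obtain ⟨r, s, h, rfl⟩ := exists_mkB _ p
  rw [f_single, fAux_mkB _ _ _ _ (by omega), map_add, lam_single, lam_single,
    Nat.factorial_succ, Nat.factorial_succ]
  push_cast
  have e1 : (r : ℚ) + 1 ≠ 0 := by positivity
  have e2 : (s : ℚ) + 1 ≠ 0 := by positivity
  field_simp
  ring

theorem f_range_codim_one_of_odd (a : ℕ) (ha : 3 ≤ a) (hodd : Odd a) :
    Module.finrank ℚ (V (a + 1) ⧸ LinearMap.range (f a)) = 1 ∧
      IsCompl (LinearMap.range (f a))
        (Submodule.span ℚ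
          {Finsupp.single
            (⟨((a - 1) / 2, (a + 3) / 2), by
              obtain ⟨t, ht⟩ := hodd
              subst ht
              refine ⟨?_, ?_, ?_⟩ <;> omega⟩ : B (a + 1)) (1 : ℚ)}) := by
  obtain ⟨t, rfl⟩ := hodd
  have key : IsCompl (LinearMap.range (f (2 * t + 1)))
      (Submodule.span ℚ {eV t t (by omega) (by omega)}) := by
    constructor
    · rw [Submodule.disjoint_def]
      rintro _ ⟨x, rfl⟩ hy
      obtain ⟨c, hc⟩ := Submodule.mem_span_singleton.1 hy
      have h := lam_f t x
      rw [← hc, map_smul, eV, lam_single] at h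
      have hc0 : c = 0 := by
        simpa [Nat.factorial_ne_zero] using h
      rw [← hc, hc0, zero_smul]
    · rw [codisjoint_iff, eq_top_iff]
      set M := LinearMap.range (f (2 * t + 1)) ⊔
        Submodule.span ℚ {eV t t (by omega) (by omega)} with hMdef
      have hM : LinearMap.range (f (2 * t + 1)) ≤ M := le_sup_left
      have ht : eV t t (by omega) (by omega) ∈ M :=
        Submodule.mem_sup_right (Submodule.mem_span_singleton_self _)
      have h1 := (eV_mem_iff_one t M hM t (by omega) (by omega)).1 ht
      intro x _
      induction x using Finsupp.induction_linear with
      | zero => exact M.zero_mem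
      | add x y hx hy => exact M.add_mem (hx trivial) (hy trivial)
      | single p c =>
        obtain ⟨r, s, ⟨g1, g2, g3⟩, rfl⟩ := exists_mkB _ p
        have h := M.smul_mem c ((eV_mem_iff_one t M hM r g1 (by omega)).2 h1)
        obtain rfl : s = 2 * t + 2 - r := by omega
        rwa [eV, Finsupp.smul_single, smul_eq_mul, mul_one] at h
  have hv : eV t t (by omega) (by omega) = Finsupp.single
      (mkB (2 * t + 1 + 1) ((2 * t + 1 - 1) / 2) ((2 * t + 1 + 3) / 2) (by omega))
        (1 : ℚ) := by
    unfold eV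
    congr 2 <;> omega
  refine ⟨?_, ?_⟩
  · rw [(Submodule.quotientEquivOfIsCompl _ _ key).finrank_eq]
    apply finrank_span_singleton
    simp [eV]
  · rw [hv] at key
    exact key
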